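/- arXiv:2111.10301 — 3 statements merged into one kernel-verified Lean document; each statement's English description precedes it below -/
import Mathlib

section
/- Let x : [0,1] → ℝ be a continuous function with Faber–Schauder coefficients θ_{m,k}. If x has bounded variation on [0,1], then sup_{n∈ℕ} 2^{−n/2} Σ_{k=0}^{2^n−1} |θ_{n,k}| < ∞. -/
/-!
The factor `2 ^ (-n / 2)` cancels the normalisation of `θ_{n,k}`, and what remains is the second
difference of `x` at the nodes `2k`, `2k + 1`, `2k + 2` of the grid `i / 2 ^ (n + 1)`, which is a
difference of two consecutive increments. The triangle inequality then bounds the whole expression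
by the sum of all absolute increments along this grid, hence by the total variation of `x`.
-/

open Filter Finset

noncomputable section

/-- Faber–Schauder coefficient `θ_{m,k}` of `x`. -/
def fsCoeff (x : ℝ → ℝ) (m k : ℕ) : ℝ :=
  2 ^ ((m : ℝ) / 2) *
    (2 * x ((2 * (k : ℝ) + 1) / 2 ^ (m + 1)) - x ((k : ℝ) / 2 ^ m) - x (((k : ℝ) + 1) / 2 ^ m))

/-- `s_n = (∑_{m<n} ∑_{k<2^m} θ_{m,k}²)^{1/2}`. -/
def sSeq (x : ℝ → ℝ) (n : ℕ) : ℝ :=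
  Real.sqrt (∑ m ∈ Finset.range n, ∑ k ∈ Finset.range (2 ^ m), fsCoeff x m k ^ 2)

theorem sum_range_two_mul {M : Type*} [AddCommMonoid M] (a : ℕ → M) (n : ℕ) :
    ∑ i ∈ range (2 * n), a i = ∑ k ∈ range n, (a (2 * k) + a (2 * k + 1)) := by
  induction n with
  | zero => simp
  | succ n ih => rw [Nat.mul_succ, sum_range_succ, sum_range_succ, sum_range_succ, ih, add_assoc]

theorem norm_two_nsmul_sub_sub_le {E : Type*} [SeminormedAddCommGroup E] (a b c : E) :
    ‖2 • b - a - c‖ ≤ dist b a + dist c b :=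
  calc ‖2 • b - a - c‖ = ‖(b - a) - (c - b)‖ := by congr 1; abel
    _ ≤ ‖b - a‖ + ‖c - b‖ := norm_sub_le _ _
    _ = dist b a + dist c b := by rw [dist_eq_norm, dist_eq_norm]

section BoundedVariation

variable {α : Type*} [LinearOrder α] {s : Set α} {u : ℕ → α} {n : ℕ}

theorem sum_dist_le_toReal_eVariationOn {E : Type*} [PseudoMetricSpace E] {f : α → E}
    (hf : BoundedVariationOn f s) (hu : MonotoneOn u (Set.Iic n)) (hus : ∀ i ≤ n, u i ∈ s) :
    ∑ i ∈ range n, dist (f (u (i + 1))) (f (u i)) ≤ (eVariationOn f s).toReal := by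
  have h := ENNReal.toReal_mono hf (eVariationOn.sum_le_of_monotoneOn_Iic hu hus)
  rw [ENNReal.toReal_sum fun _ _ => edist_ne_top _ _] at h
  simpa only [dist_edist] using h

theorem sum_norm_two_nsmul_sub_sub_le_toReal_eVariationOn {E : Type*} [SeminormedAddCommGroup E]
    {f : α → E} (hf : BoundedVariationOn f s) (hu : MonotoneOn u (Set.Iic (2 * n)))
    (hus : ∀ i ≤ 2 * n, u i ∈ s) :
    ∑ k ∈ range n, ‖2 • f (u (2 * k + 1)) - f (u (2 * k)) - f (u (2 * k + 2))‖
      ≤ (eVariationOn f s).toReal :=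
  calc ∑ k ∈ range n, ‖2 • f (u (2 * k + 1)) - f (u (2 * k)) - f (u (2 * k + 2))‖
    _ ≤ ∑ k ∈ range n, (dist (f (u (2 * k + 1))) (f (u (2 * k))) +
          dist (f (u (2 * k + 2))) (f (u (2 * k + 1)))) :=
        sum_le_sum fun _ _ => norm_two_nsmul_sub_sub_le _ _ _
    _ = ∑ i ∈ range (2 * n), dist (f (u (i + 1))) (f (u i)) :=
        (sum_range_two_mul (fun i => dist (f (u (i + 1))) (f (u i))) n).symm
    _ ≤ (eVariationOn f s).toReal := sum_dist_le_toReal_eVariationOn hf hu hus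

end BoundedVariation

/-- The dyadic point `i / 2 ^ m`. The three nodes of `fsCoeff x m k` are the points of level `m + 1`
with indices `2 * k`, `2 * k + 1` and `2 * k + 2`. -/
def dyadicPoint (m i : ℕ) : ℝ :=
  i / 2 ^ m

theorem monotone_dyadicPoint (m : ℕ) : Monotone (dyadicPoint m) := fun i j hij => by
  unfold dyadicPoint
  gcongr

theorem dyadicPoint_mem_Icc {m i : ℕ} (hi : i ≤ 2 ^ m) : dyadicPoint m i ∈ Set.Icc (0 : ℝ) 1 :=
  ⟨by unfold dyadicPoint; positivity, div_le_one_of_le₀ (mod_cast hi) (by positivity)⟩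

theorem dyadicPoint_succ_two_mul (m i : ℕ) : dyadicPoint (m + 1) (2 * i) = dyadicPoint m i := by
  simp only [dyadicPoint, Nat.cast_mul, Nat.cast_ofNat, pow_succ']
  exact mul_div_mul_left _ _ two_ne_zero

theorem fsCoeff_eq_dyadicPoint (x : ℝ → ℝ) (m k : ℕ) :
    fsCoeff x m k = 2 ^ ((m : ℝ) / 2) *
      (2 • x (dyadicPoint (m + 1) (2 * k + 1)) - x (dyadicPoint (m + 1) (2 * k)) -
        x (dyadicPoint (m + 1) (2 * k + 2))) := by
  rw [← Nat.mul_succ, dyadicPoint_succ_two_mul, dyadicPoint_succ_two_mul]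
  simp only [fsCoeff, dyadicPoint, nsmul_eq_mul]
  push_cast
  rfl

theorem two_rpow_mul_abs_fsCoeff (x : ℝ → ℝ) (m k : ℕ) :
    (2 : ℝ) ^ (-(m : ℝ) / 2) * |fsCoeff x m k| =
      ‖2 • x (dyadicPoint (m + 1) (2 * k + 1)) - x (dyadicPoint (m + 1) (2 * k)) -
        x (dyadicPoint (m + 1) (2 * k + 2))‖ := by
  have two_rpow_pos : (0 : ℝ) < 2 ^ ((m : ℝ) / 2) := Real.rpow_pos_of_pos two_pos _
  rw [fsCoeff_eq_dyadicPoint, abs_mul, abs_of_pos two_rpow_pos, neg_div,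
    Real.rpow_neg zero_le_two, inv_mul_cancel_left₀ two_rpow_pos.ne', Real.norm_eq_abs]

theorem stmt10_general (x : ℝ → ℝ) (hbv : BoundedVariationOn x (Set.Icc 0 1)) (n : ℕ) :
    (2 : ℝ) ^ (-(n : ℝ) / 2) * ∑ k ∈ range (2 ^ n), |fsCoeff x n k|
      ≤ (eVariationOn x (Set.Icc 0 1)).toReal := by
  simp only [mul_sum, two_rpow_mul_abs_fsCoeff]
  exact sum_norm_two_nsmul_sub_sub_le_toReal_eVariationOn hbv
    ((monotone_dyadicPoint (n + 1)).monotoneOn _)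
    fun i hi => dyadicPoint_mem_Icc (hi.trans_eq (pow_succ' 2 n).symm)

theorem stmt10 (x : ℝ → ℝ) (hx : ContinuousOn x (Set.Icc 0 1))
    (hbv : BoundedVariationOn x (Set.Icc 0 1)) :
    BddAbove (Set.range (fun n : ℕ =>
      (2 : ℝ) ^ (-(n : ℝ) / 2) * ∑ k ∈ Finset.range (2 ^ n), |fsCoeff x n k|)) :=
  ⟨_, Set.forall_mem_range.2 (stmt10_general x hbv)⟩
end
end

section
/- Let n ∈ ℕ, let 0 ≤ m ≤ n − 1 and 0 ≤ k ≤ 2^m − 1, and let t = Σ_{j=1}^{n} 2^{−j} a_j with a_j ∈ {0,1} for each j. Then e_{m,k}(t + 2^{−n}) − e_{m,k}(t) = 2^{m/2−n}(1 − 2a_{m+1}) if ⌊2^m t⌋ = k, and e_{m,k}(t + 2^{−n}) − e_{m,k}(t) = 0 otherwise. -/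
open Filter Finset

noncomputable section

/-- The basic Faber–Schauder function `e_{0,0}(t) = (min(t, 1-t))⁺`. -/
def e00 (t : ℝ) : ℝ := max (min t (1 - t)) 0

/-- The Faber–Schauder functions `e_{m,k}(t) = 2^{-m/2} e_{0,0}(2^m t - k)`. -/
def eFS (m : ℕ) (k : ℤ) (t : ℝ) : ℝ := 2 ^ (-(m : ℝ) / 2) * e00 (2 ^ m * t - k)

/-!
The function `e_{m,k}` is affine on each closed dyadic interval of length `2^{-(m+1)}`: its slope is
`2^{m/2}` on the left half of `[k/2^m, (k+1)/2^m]`, `-2^{m/2}` on the right half, and `0` on every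
other such interval. The points `t` and `t + 2^{-n}` are the endpoints of the dyadic interval of
length `2^{-n}` determined by the digits `a_1, …, a_n`, which lies in the one of length `2^{-(m+1)}`
determined by `a_1, …, a_{m+1}`. The digits up to `a_m` decide whether the latter is a half of
`[k/2^m, (k+1)/2^m]`, and `a_{m+1}` decides which half.
-/

/-- The closed dyadic interval `[q / 2^n, (q + 1) / 2^n]`. Both endpoints are included because the
increments of `e_{m,k}` are taken between the endpoints of such an interval. -/
def dyadicIcc (n : ℕ) (q : ℤ) : Set ℝ := Set.Icc (q / 2 ^ n) ((q + 1) / 2 ^ n)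

section DyadicIcc

variable {n : ℕ} {q : ℤ} {s t : ℝ}

lemma mem_dyadicIcc_iff : t ∈ dyadicIcc n q ↔ (q : ℝ) ≤ 2 ^ n * t ∧ 2 ^ n * t ≤ q + 1 := by
  rw [dyadicIcc, Set.mem_Icc, div_le_iff₀' (by positivity), le_div_iff₀' (by positivity)]

lemma dyadicIcc_succ_subset {b : ℤ} (hb : b = 0 ∨ b = 1) :
    dyadicIcc (n + 1) (2 * q + b) ⊆ dyadicIcc n q := by
  intro t ht
  rw [mem_dyadicIcc_iff, pow_succ'] at ht
  rw [mem_dyadicIcc_iff]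
  rcases hb with rfl | rfl <;> push_cast at ht <;> constructor <;> linarith

lemma floor_two_pow_mul_of_mem_dyadicIcc (ht : t ∈ dyadicIcc n q) (hs : s ∈ dyadicIcc n q)
    (hts : t < s) : ⌊(2 : ℝ) ^ n * t⌋ = q := by
  rw [mem_dyadicIcc_iff] at ht hs
  have hlt : (2 : ℝ) ^ n * t < 2 ^ n * s := by gcongr
  exact Int.floor_eq_iff.2 ⟨ht.1, hlt.trans_le hs.2⟩

lemma two_pow_mul_sub_mem_dyadicIcc {m : ℕ} (k : ℤ) (ht : t ∈ dyadicIcc (m + n) q) :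
    2 ^ m * t - k ∈ dyadicIcc n (q - 2 ^ n * k) := by
  rw [mem_dyadicIcc_iff, pow_add] at ht
  rw [mem_dyadicIcc_iff]
  push_cast
  constructor <;> linarith

end DyadicIcc

/-- The integer with binary digits `a 1, …, a n`, most significant first. Thus
`digitPrefix a n / 2^n` is the partial sum of the binary expansion with digits `a`. The entry `a 0`
is ignored, and the digits may be arbitrary integers. -/
def digitPrefix (a : ℕ → ℤ) : ℕ → ℤ
  | 0 => 0
  | n + 1 => 2 * digitPrefix a n + a (n + 1)

lemma digitPrefix_div_two_pow (a : ℕ → ℤ) (n : ℕ) :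
    (digitPrefix a n : ℝ) / 2 ^ n = ∑ j ∈ Finset.Icc 1 n, (a j : ℝ) / 2 ^ j := by
  induction n with
  | zero => simp [digitPrefix]
  | succ n ih =>
    rw [Finset.sum_Icc_succ_top (by omega), ← ih, digitPrefix]
    push_cast
    field_simp
    ring

lemma dyadicIcc_digitPrefix_subset {a : ℕ → ℤ} {m n : ℕ} (hmn : m ≤ n)
    (ha : ∀ j, m < j → j ≤ n → a j = 0 ∨ a j = 1) :
    dyadicIcc n (digitPrefix a n) ⊆ dyadicIcc m (digitPrefix a m) := by
  induction n, hmn using Nat.le_induction with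
  | base => exact subset_rfl
  | succ n hmn ih =>
    exact (dyadicIcc_succ_subset (ha (n + 1) (by omega) le_rfl)).trans
      (ih fun j hmj hjn => ha j hmj (by omega))

section Tent

variable {x y : ℝ}

lemma e00_of_nonpos (hx : x ≤ 0) : e00 x = 0 :=
  max_eq_right ((min_le_left _ _).trans hx)

lemma e00_of_one_le (hx : 1 ≤ x) : e00 x = 0 :=
  max_eq_right ((min_le_right _ _).trans (sub_nonpos.2 hx))

lemma e00_of_le_half (hx₀ : 0 ≤ x) (hx : x ≤ 1 / 2) : e00 x = x := by
  rw [e00, min_eq_left (by linarith), max_eq_left hx₀]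

lemma e00_of_half_le (hx : 1 / 2 ≤ x) (hx₁ : x ≤ 1) : e00 x = 1 - x := by
  rw [e00, min_eq_right (by linarith), max_eq_left (by linarith)]

lemma e00_sub_e00_of_mem_dyadicIcc {N b : ℤ} (hb : b = 0 ∨ b = 1)
    (hx : x ∈ dyadicIcc 1 (2 * N + b)) (hy : y ∈ dyadicIcc 1 (2 * N + b)) :
    e00 y - e00 x = if N = 0 then (y - x) * (1 - 2 * b) else 0 := by
  have hxN := mem_dyadicIcc_iff.1 (dyadicIcc_succ_subset hb hx)
  have hyN := mem_dyadicIcc_iff.1 (dyadicIcc_succ_subset hb hy)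
  rw [pow_zero, one_mul] at hxN hyN
  rw [mem_dyadicIcc_iff, pow_one] at hx hy
  rcases lt_trichotomy N 0 with hN | rfl | hN
  · have hN' : (N : ℝ) + 1 ≤ 0 := by exact_mod_cast hN
    rw [if_neg hN.ne, e00_of_nonpos (by linarith), e00_of_nonpos (by linarith), sub_zero]
  · rw [if_pos rfl]
    rcases hb with rfl | rfl <;> push_cast at hx hy ⊢
    · rw [e00_of_le_half (by linarith) (by linarith), e00_of_le_half (by linarith) (by linarith)]
      ring
    · rw [e00_of_half_le (by linarith) (by linarith), e00_of_half_le (by linarith) (by linarith)]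
      ring
  · have hN' : (1 : ℝ) ≤ N := by exact_mod_cast hN
    rw [if_neg hN.ne', e00_of_one_le (by linarith), e00_of_one_le (by linarith), sub_zero]

end Tent

lemma eFS_sub_eFS_of_mem_dyadicIcc {m : ℕ} {k N b : ℤ} {s t : ℝ} (hb : b = 0 ∨ b = 1)
    (ht : t ∈ dyadicIcc (m + 1) (2 * N + b)) (hs : s ∈ dyadicIcc (m + 1) (2 * N + b)) :
    eFS m k s - eFS m k t = if N = k then 2 ^ ((m : ℝ) / 2) * (s - t) * (1 - 2 * b) else 0 := by
  have hindex : 2 * N + b - 2 ^ 1 * k = 2 * (N - k) + b := by ring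
  have ht' := two_pow_mul_sub_mem_dyadicIcc k ht
  have hs' := two_pow_mul_sub_mem_dyadicIcc k hs
  rw [hindex] at ht' hs'
  have hscale : (2 : ℝ) ^ (-(m : ℝ) / 2) * 2 ^ m = 2 ^ ((m : ℝ) / 2) := by
    rw [← Real.rpow_natCast, ← Real.rpow_add two_pos]
    ring_nf
  rw [eFS, eFS, ← mul_sub, e00_sub_e00_of_mem_dyadicIcc hb ht' hs', mul_ite, mul_zero, ← hscale]
  simp only [sub_eq_zero]
  congr 1
  ring

theorem stmt15_general {m n : ℕ} (hmn : m < n) (k : ℤ) {a : ℕ → ℤ}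
    (ha : ∀ j, m < j → j ≤ n → a j = 0 ∨ a j = 1)
    {t : ℝ} (ht : t = ∑ j ∈ Finset.Icc 1 n, (a j : ℝ) / 2 ^ j) :
    eFS m k (t + 1 / 2 ^ n) - eFS m k t =
      if ⌊(2 : ℝ) ^ m * t⌋ = k then
        2 ^ ((m : ℝ) / 2 - (n : ℝ)) * (1 - 2 * (a (m + 1) : ℝ))
      else 0 := by
  have hdigit : a (m + 1) = 0 ∨ a (m + 1) = 1 := ha (m + 1) (by omega) hmn
  have hsub : dyadicIcc n (digitPrefix a n) ⊆ dyadicIcc (m + 1) (digitPrefix a (m + 1)) :=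
    dyadicIcc_digitPrefix_subset hmn fun j hj => ha j (by omega)
  have hstep : t < t + 1 / 2 ^ n := lt_add_of_pos_right t (by positivity)
  have hIcc : dyadicIcc n (digitPrefix a n) = Set.Icc t (t + 1 / 2 ^ n) := by
    rw [dyadicIcc, add_div, digitPrefix_div_two_pow, ← ht]
  rw [hIcc] at hsub
  have ht_mem := hsub (Set.left_mem_Icc.2 hstep.le)
  have hs_mem := hsub (Set.right_mem_Icc.2 hstep.le)
  have hfloor : ⌊(2 : ℝ) ^ m * t⌋ = digitPrefix a m :=
    floor_two_pow_mul_of_mem_dyadicIcc (dyadicIcc_succ_subset hdigit ht_mem)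
      (dyadicIcc_succ_subset hdigit hs_mem) hstep
  rw [eFS_sub_eFS_of_mem_dyadicIcc hdigit ht_mem hs_mem, hfloor, add_sub_cancel_left,
    Real.rpow_sub two_pos, Real.rpow_natCast, mul_one_div]

theorem stmt15 (n : ℕ) (hn : 1 ≤ n) (m k : ℕ) (hm : m ≤ n - 1) (hk : k ≤ 2 ^ m - 1)
    (a : ℕ → ℕ) (ha : ∀ j : ℕ, 1 ≤ j → j ≤ n → a j = 0 ∨ a j = 1)
    (t : ℝ) (ht : t = ∑ j ∈ Finset.Icc 1 n, (a j : ℝ) / 2 ^ j) :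
    eFS m (k : ℤ) (t + 1 / 2 ^ n) - eFS m (k : ℤ) t =
      if ⌊(2 : ℝ) ^ m * t⌋ = (k : ℤ) then
        2 ^ ((m : ℝ) / 2 - (n : ℝ)) * (1 - 2 * (a (m + 1) : ℝ))
      else 0 := by
  exact stmt15_general (a := fun j => (a j : ℤ)) (by omega) k
    (fun j hj hjn => by exact_mod_cast ha j (by omega) hjn)
    (by simpa only [Int.cast_natCast] using ht)
end
end

section
/- Fix m ∈ ℕ and α_0, …, α_m ≥ 0 with α_0 > 0, and let n > m + 1. Let x : [0,1] → ℝ be a continuous function with s_{n−m−1}(x) > 0. Then the function λ ↦ Σ_{k=n−m}^{n} α_{n−k}(Ĥ_k(λx) − Ĥ_{k−1}(λx))² has a unique minimizer λ^s_n > 0, and the sequential scale estimate H^s_n(x) := Ĥ_n(λ^s_n x) satisfies H^s_n(x) = Σ_{k=n−m−1}^{n} β_{n,k} Ĥ_k(x), where, with c^s_n := Σ_{k=n−m}^{n} α_{n−k}/(k²(k−1)²), the coefficients are β_{n,n} = 1 + α_0/(c^s_n n²(n−1)), β_{n,k} = (1/(c^s_n n k))(α_{n−k}/(k−1) − α_{n−k−1}/(k+1))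 for n − m ≤ k ≤ n − 1, and β_{n,n−m−1} = −α_m/(c^s_n n (n−m)(n−m−1)). -/
/-!
Scaling `x` by `μ > 0` multiplies every `s_k` by `μ`, so `Ĥ_k(μx) = Ĥ_k(x) - L / k` with
`L = log₂ μ`. Hence the increment `Ĥ_k - Ĥ_{k-1}` changes by `L / (k(k-1))`, and the objective is a
quadratic polynomial in `L` with leading coefficient `c^s_n > 0`, which is minimal exactly at its
vertex `L₀ = -(1 / c^s_n) ∑ α_{n-k} (Ĥ_k(x) - Ĥ_{k-1}(x)) / (k(k-1))`. Summing by parts in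
`Ĥ_n(x) - L₀ / n` yields the coefficients `β_{n,k}`.
-/

open Filter Finset

noncomputable section

/-- The Gladyshev estimate `Ĥ_n(x) = 1 - (1/n) log₂ s_n(x)`. -/
def Hhat (x : ℝ → ℝ) (n : ℕ) : ℝ := 1 - Real.logb 2 (sSeq x n) / n

/-- The objective function for the sequential scaling factor:
`λ ↦ ∑_{k=n-m}^n α_{n-k} (Ĥ_k(λx) - Ĥ_{k-1}(λx))²`. -/
def seqObj (m : ℕ) (α : ℕ → ℝ) (n : ℕ) (x : ℝ → ℝ) (lam : ℝ) : ℝ :=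
  ∑ k ∈ Finset.Icc (n - m) n,
    α (n - k) * (Hhat (fun t => lam * x t) k - Hhat (fun t => lam * x t) (k - 1)) ^ 2

/-- `c^s_n = ∑_{k=n-m}^n α_{n-k} / (k²(k-1)²)`. -/
def csn (m : ℕ) (α : ℕ → ℝ) (n : ℕ) : ℝ :=
  ∑ k ∈ Finset.Icc (n - m) n, α (n - k) / ((k : ℝ) ^ 2 * ((k : ℝ) - 1) ^ 2)

/-- The logarithm to base 2 of the optimal scale: the vertex of the objective `seqObj m α n x`
regarded as a quadratic polynomial in the logarithm of the scaling factor. -/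
def logOptimalScale (m : ℕ) (α : ℕ → ℝ) (n : ℕ) (x : ℝ → ℝ) : ℝ :=
  -(∑ k ∈ Icc (n - m) n,
    α (n - k) / ((k : ℝ) * ((k : ℝ) - 1)) * (Hhat x k - Hhat x (k - 1))) / csn m α n

/-- The sequential scaling factor `λ^s_n`, given in closed form; it is characterised as the unique
minimizer of the objective in `pos_and_forall_seqObj_le_iff`. -/
def optimalScale (m : ℕ) (α : ℕ → ℝ) (n : ℕ) (x : ℝ → ℝ) : ℝ :=
  2 ^ logOptimalScale m α n x

theorem exists_sum_mul_add_mul_sq_eq_vertex_form {ι K : Type*} [Field K] (s : Finset ι)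
    (a d e : ι → K) (h : ∑ k ∈ s, a k * e k ^ 2 ≠ 0) :
    ∃ C : K, ∀ t : K, ∑ k ∈ s, a k * (d k + t * e k) ^ 2 =
      (∑ k ∈ s, a k * e k ^ 2) *
        (t - -(∑ k ∈ s, a k * e k * d k) / ∑ k ∈ s, a k * e k ^ 2) ^ 2 + C := by
  refine ⟨∑ k ∈ s, a k * d k ^ 2 - (∑ k ∈ s, a k * e k * d k) ^ 2 / ∑ k ∈ s, a k * e k ^ 2,
    fun t => ?_⟩
  have expand : ∑ k ∈ s, a k * (d k + t * e k) ^ 2 =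
      t ^ 2 * ∑ k ∈ s, a k * e k ^ 2 + 2 * t * ∑ k ∈ s, a k * e k * d k +
        ∑ k ∈ s, a k * d k ^ 2 := by
    simp only [mul_sum, ← sum_add_distrib]
    exact sum_congr rfl fun k _ => by ring
  rw [expand]
  field_simp
  ring

theorem isMinOn_iff_eq_vertex {X K : Type*} [Field K] [LinearOrder K] [IsStrictOrderedRing K]
    {s : Set X} {f g : X → K} {c v C : K} (hc : 0 < c)
    (hf : ∀ y ∈ s, f y = c * (g y - v) ^ 2 + C) (hv : v ∈ g '' s) {y : X} (hy : y ∈ s) :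
    IsMinOn f s y ↔ g y = v := by
  rw [isMinOn_iff]
  constructor
  · intro hmin
    obtain ⟨z, hz, rfl⟩ := hv
    have hle : c * (g y - g z) ^ 2 ≤ 0 := by
      simpa [hf y hy, hf z hz] using hmin z hz
    have hsq : (g y - g z) ^ 2 = 0 :=
      le_antisymm (nonpos_of_mul_nonpos_right hle hc) (sq_nonneg _)
    exact sub_eq_zero.mp (pow_eq_zero_iff two_ne_zero |>.mp hsq)
  · rintro rfl z hz
    rw [hf y hy, hf z hz, sub_self, zero_pow two_ne_zero, mul_zero]
    gcongr
    positivity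

theorem sum_Icc_mul_sub_pred {R : Type*} [Ring R] (w f : ℕ → R) {a n : ℕ} (han : a ≤ n) :
    ∑ k ∈ Icc a n, w k * (f k - f (k - 1)) =
      w n * f n + ∑ k ∈ Ico a n, (w k - w (k + 1)) * f k - w a * f (a - 1) := by
  induction n, han using Nat.le_induction with
  | base => simp [mul_sub]
  | succ n hn ih =>
    rw [sum_Icc_succ_top (by lia), ih, sum_Ico_succ_top hn, Nat.add_sub_cancel, mul_sub, sub_mul]
    abel

section Scaling

variable (x : ℝ → ℝ)

theorem fsCoeff_const_mul (μ : ℝ) (m k : ℕ) :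
    fsCoeff (fun t => μ * x t) m k = μ * fsCoeff x m k := by
  simp only [fsCoeff]
  ring

theorem sSeq_const_mul (μ : ℝ) (n : ℕ) : sSeq (fun t => μ * x t) n = |μ| * sSeq x n := by
  simp only [sSeq, fsCoeff_const_mul, mul_pow, ← mul_sum]
  rw [Real.sqrt_mul (sq_nonneg μ), Real.sqrt_sq_eq_abs]

theorem sSeq_mono : Monotone (sSeq x) := fun _ _ hab =>
  Real.sqrt_le_sqrt <| sum_le_sum_of_subset_of_nonneg (range_mono hab)
    fun _ _ _ => sum_nonneg fun _ _ => sq_nonneg _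

variable {x} {μ : ℝ} {k : ℕ}

theorem Hhat_const_mul (hμ : μ ≠ 0) (hk : 0 < sSeq x k) :
    Hhat (fun t => μ * x t) k = Hhat x k - Real.logb 2 μ / k := by
  simp only [Hhat, sSeq_const_mul]
  rw [Real.logb_mul (abs_ne_zero.mpr hμ) hk.ne', Real.logb_abs]
  ring

theorem Hhat_const_mul_sub_pred (hμ : μ ≠ 0) (hk : 2 ≤ k) (hs : 0 < sSeq x (k - 1)) :
    Hhat (fun t => μ * x t) k - Hhat (fun t => μ * x t) (k - 1) =
      Hhat x k - Hhat x (k - 1) + Real.logb 2 μ * ((k : ℝ) * ((k : ℝ) - 1))⁻¹ := by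
  have h2 : (2 : ℝ) ≤ k := by exact_mod_cast hk
  have h0 : (k : ℝ) ≠ 0 := by linarith
  have h1 : (k : ℝ) - 1 ≠ 0 := by linarith
  rw [Hhat_const_mul hμ (hs.trans_le (sSeq_mono x (Nat.sub_le k 1))), Hhat_const_mul hμ hs,
    Nat.cast_pred (by lia)]
  field_simp
  ring

end Scaling

section Objective

variable {m : ℕ} {α : ℕ → ℝ} {n : ℕ} {x : ℝ → ℝ}

theorem optimalScale_pos : 0 < optimalScale m α n x :=
  Real.rpow_pos_of_pos two_pos _

theorem logb_optimalScale : Real.logb 2 (optimalScale m α n x) = logOptimalScale m α n x :=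
  Real.logb_rpow two_pos (by norm_num)

theorem csn_pos (hα : ∀ k : ℕ, k ≤ m → 0 ≤ α k) (hα0 : 0 < α 0) (hn : 1 < n) :
    0 < csn m α n := by
  refine sum_pos' (fun k hk => ?_) ⟨n, mem_Icc.mpr ⟨Nat.sub_le n m, le_rfl⟩, ?_⟩
  · have := hα (n - k) (by grind)
    positivity
  · have hn' : (0 : ℝ) < (n : ℝ) - 1 := sub_pos.mpr (by exact_mod_cast hn)
    rw [Nat.sub_self]
    positivity

theorem csn_eq_sum_mul_inv_sq (m : ℕ) (α : ℕ → ℝ) (n : ℕ) :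
    csn m α n = ∑ k ∈ Icc (n - m) n, α (n - k) * ((k : ℝ) * ((k : ℝ) - 1))⁻¹ ^ 2 := by
  simp only [csn, div_eq_mul_inv, inv_pow, mul_pow]

theorem seqObj_eq_sum_add_logb_mul (hn : m + 1 < n) (hs : 0 < sSeq x (n - m - 1)) {μ : ℝ}
    (hμ : μ ≠ 0) :
    seqObj m α n x μ = ∑ k ∈ Icc (n - m) n, α (n - k) *
      (Hhat x k - Hhat x (k - 1) + Real.logb 2 μ * ((k : ℝ) * ((k : ℝ) - 1))⁻¹) ^ 2 := by
  refine sum_congr rfl fun k hk => ?_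
  have hnk : n - m ≤ k := (mem_Icc.mp hk).1
  rw [Hhat_const_mul_sub_pred hμ (by lia) (hs.trans_le (sSeq_mono x (by lia)))]

theorem exists_seqObj_eq_vertex_form (hn : m + 1 < n) (hc : csn m α n ≠ 0)
    (hs : 0 < sSeq x (n - m - 1)) :
    ∃ C : ℝ, ∀ μ : ℝ, μ ≠ 0 → seqObj m α n x μ =
      csn m α n * (Real.logb 2 μ - logOptimalScale m α n x) ^ 2 + C := by
  rw [csn_eq_sum_mul_inv_sq] at hc
  obtain ⟨C, hC⟩ := exists_sum_mul_add_mul_sq_eq_vertex_form _ (fun k => α (n - k))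
    (fun k => Hhat x k - Hhat x (k - 1)) _ hc
  refine ⟨C, fun μ hμ => ?_⟩
  rw [seqObj_eq_sum_add_logb_mul hn hs hμ, hC, ← csn_eq_sum_mul_inv_sq]
  simp only [logOptimalScale, div_eq_mul_inv]

theorem isMinOn_seqObj_iff (hn : m + 1 < n) (hc : 0 < csn m α n)
    (hs : 0 < sSeq x (n - m - 1)) {lam : ℝ} (hlam : 0 < lam) :
    IsMinOn (seqObj m α n x) (Set.Ioi 0) lam ↔ lam = optimalScale m α n x := by
  obtain ⟨C, hC⟩ := exists_seqObj_eq_vertex_form hn hc.ne' hs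
  have hv : logOptimalScale m α n x ∈ Real.logb 2 '' Set.Ioi 0 :=
    ⟨_, optimalScale_pos, logb_optimalScale⟩
  have hquad : ∀ μ ∈ Set.Ioi (0 : ℝ), seqObj m α n x μ =
      csn m α n * (Real.logb 2 μ - logOptimalScale m α n x) ^ 2 + C :=
    fun μ hμ => hC μ (ne_of_gt hμ)
  rw [isMinOn_iff_eq_vertex hc hquad hv hlam,
    Real.logb_eq_iff_rpow_eq two_pos (by norm_num) hlam, eq_comm, optimalScale]

theorem pos_and_forall_seqObj_le_iff (hn : m + 1 < n) (hc : 0 < csn m α n)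
    (hs : 0 < sSeq x (n - m - 1)) (lam : ℝ) :
    (0 < lam ∧ ∀ μ : ℝ, 0 < μ → seqObj m α n x lam ≤ seqObj m α n x μ) ↔
      lam = optimalScale m α n x := by
  constructor
  · rintro ⟨hlam, hmin⟩
    exact (isMinOn_seqObj_iff hn hc hs hlam).mp (isMinOn_iff.mpr hmin)
  · rintro rfl
    exact ⟨optimalScale_pos,
      isMinOn_iff.mp ((isMinOn_seqObj_iff hn hc hs optimalScale_pos).mpr rfl)⟩

theorem Hhat_optimalScale_mul (hm : m ≤ n) (hs : 0 < sSeq x n) :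
    Hhat (fun t => optimalScale m α n x * x t) n =
      (1 + α 0 / (csn m α n * (n : ℝ) ^ 2 * ((n : ℝ) - 1))) * Hhat x n +
      (∑ k ∈ Finset.Ico (n - m) n,
        (1 / (csn m α n * (n : ℝ) * (k : ℝ))) *
          (α (n - k) / ((k : ℝ) - 1) - α (n - k - 1) / ((k : ℝ) + 1)) * Hhat x k) +
      (-(α m) / (csn m α n * (n : ℝ) * ((n : ℝ) - m) * ((n : ℝ) - m - 1))) *
        Hhat x (n - m - 1) := by
  have hparts := sum_Icc_mul_sub_pred (fun k : ℕ => α (n - k) / ((k : ℝ) * ((k : ℝ) - 1)))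
    (Hhat x) (Nat.sub_le n m)
  simp only [Nat.sub_self, Nat.sub_sub_self hm, Nat.cast_sub hm] at hparts
  have hcoeff : ∀ k : ℕ,
      1 / (csn m α n * (n : ℝ) * (k : ℝ)) *
          (α (n - k) / ((k : ℝ) - 1) - α (n - k - 1) / ((k : ℝ) + 1)) * Hhat x k =
        1 / (csn m α n * n) * ((α (n - k) / ((k : ℝ) * ((k : ℝ) - 1)) -
          α (n - (k + 1)) / (((k + 1 : ℕ) : ℝ) * (((k + 1 : ℕ) : ℝ) - 1))) * Hhat x k) := by
    intro k
    rw [Nat.sub_sub, Nat.cast_succ, add_sub_cancel_right]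
    simp only [div_eq_mul_inv, mul_inv]
    ring
  rw [Hhat_const_mul optimalScale_pos.ne' hs, logb_optimalScale, logOptimalScale, hparts]
  simp only [hcoeff, ← mul_sum]
  simp only [div_eq_mul_inv, mul_inv]
  ring

end Objective

theorem stmt17_general (m : ℕ) (α : ℕ → ℝ) (n : ℕ) (hn : m + 1 < n) (hc : 0 < csn m α n)
    (x : ℝ → ℝ) (hs : 0 < sSeq x (n - m - 1)) :
    (∃! lam : ℝ, 0 < lam ∧ ∀ μ : ℝ, 0 < μ → seqObj m α n x lam ≤ seqObj m α n x μ) ∧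
    ∀ lam : ℝ, (0 < lam ∧ ∀ μ : ℝ, 0 < μ → seqObj m α n x lam ≤ seqObj m α n x μ) →
      Hhat (fun t => lam * x t) n =
        (1 + α 0 / (csn m α n * (n : ℝ) ^ 2 * ((n : ℝ) - 1))) * Hhat x n +
        (∑ k ∈ Finset.Ico (n - m) n,
          (1 / (csn m α n * (n : ℝ) * (k : ℝ))) *
            (α (n - k) / ((k : ℝ) - 1) - α (n - k - 1) / ((k : ℝ) + 1)) * Hhat x k) +
        (-(α m) / (csn m α n * (n : ℝ) * ((n : ℝ) - m) * ((n : ℝ) - m - 1))) *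
          Hhat x (n - m - 1) := by
  have hmin := pos_and_forall_seqObj_le_iff hn hc hs
  refine ⟨⟨_, (hmin _).mpr rfl, fun lam hlam => (hmin lam).mp hlam⟩, fun lam hlam => ?_⟩
  rw [(hmin lam).mp hlam]
  exact Hhat_optimalScale_mul (by lia) (hs.trans_le (sSeq_mono x (by lia)))

theorem stmt17 (m : ℕ) (α : ℕ → ℝ) (hα : ∀ k : ℕ, k ≤ m → 0 ≤ α k) (hα0 : 0 < α 0)
    (n : ℕ) (hn : m + 1 < n)
    (x : ℝ → ℝ) (hx : ContinuousOn x (Set.Icc 0 1))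
    (hs : 0 < sSeq x (n - m - 1)) :
    (∃! lam : ℝ, 0 < lam ∧ ∀ μ : ℝ, 0 < μ → seqObj m α n x lam ≤ seqObj m α n x μ) ∧
    ∀ lam : ℝ, (0 < lam ∧ ∀ μ : ℝ, 0 < μ → seqObj m α n x lam ≤ seqObj m α n x μ) →
      Hhat (fun t => lam * x t) n =
        (1 + α 0 / (csn m α n * (n : ℝ) ^ 2 * ((n : ℝ) - 1))) * Hhat x n +
        (∑ k ∈ Finset.Ico (n - m) n,
          (1 / (csn m α n * (n : ℝ) * (k : ℝ))) *
            (α (n - k) / ((k : ℝ) - 1) - α (n - k - 1) / ((k : ℝ) + 1)) * Hhat x k) +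
        (-(α m) / (csn m α n * (n : ℝ) * ((n : ℝ) - m) * ((n : ℝ) - m - 1))) *
          Hhat x (n - m - 1) :=
  stmt17_general m α n hn (csn_pos hα hα0 (by lia)) x hs
end
end
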